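/- There exist C₂ > 0 and n₀ > 0 such that for all n ≥ n₀ and all ε ≥ C₂/√(log n), the following holds with d = ⌈(2 + ε) n ln n⌉. Let (X, y) be an isotropic Gaussian sample of size n in dimension d with rows x₁,…,xₙ. Then for each i ∈ [n], P[ K_{∖i} is invertible and y_i y_{∖i}ᵀ K_{∖i}⁻¹ X_{∖i} x_i ≥ 1 ] ≤ 1/(2n√(π log n)) + 1/n², where K_{∖i} = X_{∖i} X_{∖i}ᵀ and X_{∖i}, y_{∖i} denote X and y with the i-th row/entry removed. -/

import Mathlib

open MeasureTheory ProbabilityTheory Matrix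

noncomputable section

/-- `X` has i.i.d. standard Gaussian entries (equivalently, its rows are i.i.d. `N(0, I_d)`). -/
structure IsGaussSample {Ω : Type*} [MeasurableSpace Ω] (μ : Measure Ω)
    {n d : ℕ} (X : Ω → Matrix (Fin n) (Fin d) ℝ) : Prop where
  meas : ∀ i j, Measurable fun ω => X ω i j
  indep : iIndepFun (fun (p : Fin n × Fin d) ω => X ω p.1 p.2) μ
  law : ∀ i j, Measure.map (fun ω => X ω i j) μ = gaussianReal 0 1

/-- `X` with row `i` deleted. -/
def rowDel {n d : ℕ} (X : Matrix (Fin n) (Fin d) ℝ) (i : Fin n) :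
    Matrix {j : Fin n // j ≠ i} (Fin d) ℝ := X.submatrix Subtype.val id

/-- `y` with entry `i` deleted. -/
def vecDel {n : ℕ} (y : Fin n → ℝ) (i : Fin n) : {j : Fin n // j ≠ i} → ℝ := fun j => y j.val

/-!
Let `w = Aᵀ K⁻¹ y` be the least-norm solution of `A w = y`, where `A = X_{∖i}` and `K = A Aᵀ`. The
statistic is `⟪yᵢ w, xᵢ⟫` and `w` is independent of `xᵢ`, so conditionally on `A` it is a centred
Gaussian, whose tail is small as soon as `c ‖w‖² ≤ 1` with `c = 2 log n`.

To bound `‖w‖` it suffices that `‖Aᵀ v‖² ≥ c` whenever `⟪v, y⟫ = 1`, since `‖w‖²` is the inverse of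
the minimum of `‖Aᵀ v‖²` under this constraint. Put `u = y / ‖y‖`. If `⟪v, u⟫ = 1` then
`Aᵀ v = Aᵀ u + Bᵀ v`, where `B` is `A` with its component along `u` removed. The vector `Aᵀ u` is
standard Gaussian and independent of `B`, so conditionally on `B` the squared distance from `Aᵀ u`
to the range of `Bᵀ` dominates a chi-square variable with `d - |κ|` degrees of freedom, `|κ|` being
the number of rows of `A`. Its lower tail is exponentially small by Chernoff's bound.
-/

open scoped RealInnerProductSpace

section GaussianTail

lemma measureReal_gaussianReal_Ici_le {t : ℝ} (ht : 0 < t) :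
    (gaussianReal 0 1).real (Set.Ici t) ≤ Real.exp (-t ^ 2 / 2) / √(2 * Real.pi * t ^ 2) := by
  have hlin : ∀ x : ℝ, gaussianPDFReal 0 1 x ≤
      (√(2 * Real.pi))⁻¹ * Real.exp (t ^ 2 / 2) * Real.exp (-t * x) := fun x ↦ by
    simp only [gaussianPDFReal, NNReal.coe_one, mul_one, sub_zero]
    rw [mul_assoc, ← Real.exp_add]
    gcongr
    linarith [sq_nonneg (x - t)]
  have hval : ∫ x in Set.Ioi t, Real.exp (-t * x) = Real.exp (-t ^ 2) / t := by
    rw [integral_exp_mul_Ioi (neg_lt_zero.2 ht), neg_div_neg_eq, neg_mul, ← sq]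
  calc (gaussianReal 0 1).real (Set.Ici t)
      = ∫ x in Set.Ioi t, gaussianPDFReal 0 1 x := by
        rw [measureReal_def, gaussianReal_apply_eq_integral _ one_ne_zero,
          ENNReal.toReal_ofReal (integral_nonneg fun x ↦ gaussianPDFReal_nonneg 0 1 x),
          integral_Ici_eq_integral_Ioi]
    _ ≤ ∫ x in Set.Ioi t, (√(2 * Real.pi))⁻¹ * Real.exp (t ^ 2 / 2) * Real.exp (-t * x) :=
        integral_mono (integrable_gaussianPDFReal 0 1).integrableOn
          ((integrableOn_exp_mul_Ioi (neg_lt_zero.2 ht) t).const_mul _) hlin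
    _ = Real.exp (-t ^ 2 / 2) / √(2 * Real.pi * t ^ 2) := by
        rw [integral_const_mul, hval, Real.sqrt_mul (by positivity : 0 ≤ 2 * Real.pi),
          Real.sqrt_sq ht.le, show -t ^ 2 / 2 = t ^ 2 / 2 + -t ^ 2 by ring, Real.exp_add]
        field_simp

variable {E : Type*} [NormedAddCommGroup E] [InnerProductSpace ℝ E] [FiniteDimensional ℝ E]
  [MeasurableSpace E] [BorelSpace E]

lemma map_inner_stdGaussian (w : E) :
    (stdGaussian E).map (fun x ↦ ⟪w, x⟫) = (gaussianReal 0 1).map (‖w‖ * ·) := by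
  rw [gaussianReal_map_const_mul]
  change (stdGaussian E).map (innerSL ℝ w) = _
  rw [IsGaussian.map_eq_gaussianReal, variance_dual_stdGaussian, integral_strongDual_stdGaussian,
    innerSL_apply_norm]
  congr 1
  · simp
  · ext; simp

lemma stdGaussian_one_le_inner_le {c : ℝ} (hc : 0 < c) {w : E} (hw : c * ‖w‖ ^ 2 ≤ 1) :
    (stdGaussian E).real {x | 1 ≤ ⟪w, x⟫} ≤ Real.exp (-c / 2) / √(2 * Real.pi * c) := by
  have hmeas : MeasurableSet {z : ℝ | 1 ≤ z} := measurableSet_Ici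
  have hsub : {z : ℝ | 1 ≤ ‖w‖ * z} ⊆ Set.Ici √c := fun z hz ↦ by
    have hz' : 1 ≤ ‖w‖ * z := hz
    have hz0 : 0 ≤ z := by
      by_contra! h
      linarith [mul_nonpos_of_nonneg_of_nonpos (norm_nonneg w) h.le]
    refine Real.sqrt_le_iff.2 ⟨hz0, ?_⟩
    calc c ≤ c * (‖w‖ * z) ^ 2 := le_mul_of_one_le_right hc.le (one_le_pow₀ hz')
      _ = c * ‖w‖ ^ 2 * z ^ 2 := by ring
      _ ≤ z ^ 2 := mul_le_of_le_one_left (sq_nonneg z) hw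
  calc (stdGaussian E).real {x | 1 ≤ ⟪w, x⟫}
      = ((stdGaussian E).map (fun x ↦ ⟪w, x⟫)).real {z | 1 ≤ z} :=
        (map_measureReal_apply (by fun_prop) hmeas).symm
    _ = (gaussianReal 0 1).real {z | 1 ≤ ‖w‖ * z} := by
        rw [map_inner_stdGaussian, map_measureReal_apply (by fun_prop) hmeas]
        rfl
    _ ≤ (gaussianReal 0 1).real (Set.Ici √c) := measureReal_mono hsub
    _ ≤ Real.exp (-c / 2) / √(2 * Real.pi * c) := by
        simpa only [Real.sq_sqrt hc.le] using measureReal_gaussianReal_Ici_le (Real.sqrt_pos.2 hc)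

end GaussianTail

section ChiSquare

lemma integral_exp_neg_mul_sq_gaussianReal {t : ℝ} (ht : 0 ≤ t) :
    ∫ x, Real.exp (-t * x ^ 2) ∂gaussianReal 0 1 = (√(1 + 2 * t))⁻¹ := by
  have hpdf : ∀ x : ℝ, gaussianPDFReal 0 1 x • Real.exp (-t * x ^ 2) =
      (√(2 * Real.pi))⁻¹ * Real.exp (-(1 / 2 + t) * x ^ 2) := fun x ↦ by
    rw [gaussianPDFReal, smul_eq_mul, mul_assoc, ← Real.exp_add, NNReal.coe_one]
    ring_nf
  rw [integral_gaussianReal_eq_integral_smul one_ne_zero]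
  simp only [hpdf]
  rw [integral_const_mul, integral_gaussian, ← Real.sqrt_inv, ← Real.sqrt_inv,
    ← Real.sqrt_mul (by positivity)]
  congr 1
  field_simp

lemma inv_sqrt_one_add_two_mul_le_exp {t : ℝ} (ht : 0 ≤ t) :
    (√(1 + 2 * t))⁻¹ ≤ Real.exp (-(t - t ^ 2)) := by
  have hlog : 2 * (t - t ^ 2) ≤ Real.log (1 + 2 * t) := by
    refine le_trans ?_ (Real.le_log_one_add_of_nonneg (mul_nonneg zero_le_two ht))
    rw [le_div_iff₀ (by positivity)]
    nlinarith [pow_nonneg ht 3]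
  rw [Real.exp_neg]
  gcongr
  refine Real.le_sqrt_of_sq_le ?_
  rw [← Real.exp_nat_mul, ← Real.le_log_iff_exp_le (by positivity)]
  exact_mod_cast hlog

variable {E : Type*} [NormedAddCommGroup E] [InnerProductSpace ℝ E] [FiniteDimensional ℝ E]
  [MeasurableSpace E] [BorelSpace E]

lemma mgf_norm_sq_stdGaussian_neg {t : ℝ} (ht : 0 ≤ t) :
    mgf (fun x : E ↦ ‖x‖ ^ 2) (stdGaussian E) (-t) =
      (√(1 + 2 * t))⁻¹ ^ Module.finrank ℝ E := by
  have hnorm : ∀ x : Fin (Module.finrank ℝ E) → ℝ,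
      Real.exp (-t * ‖∑ i, x i • stdOrthonormalBasis ℝ E i‖ ^ 2) =
        ∏ i, Real.exp (-t * x i ^ 2) := fun x ↦ by
    rw [← Real.exp_sum, ← Finset.mul_sum, ← (stdOrthonormalBasis ℝ E).sum_sq_inner_right]
    simp [(stdOrthonormalBasis ℝ E).orthonormal.inner_right_fintype]
  rw [mgf, stdGaussian, integral_map (Measurable.aemeasurable (by fun_prop))
    (Measurable.aestronglyMeasurable (by fun_prop))]
  simp only [hnorm]
  rw [integral_fintype_prod_eq_pow (fun z : ℝ ↦ Real.exp (-t * z ^ 2)),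
    integral_exp_neg_mul_sq_gaussianReal ht, Fintype.card_fin]

lemma stdGaussian_norm_sq_le_le {s a : ℝ} (hs : 0 ≤ s) (ha : 0 < a)
    (hdim : s + a ≤ Module.finrank ℝ E) :
    (stdGaussian E).real {x | ‖x‖ ^ 2 ≤ s} ≤ Real.exp (-a ^ 2 / (4 * (s + a))) := by
  have : 0 < s + a := by positivity
  -- The minimizer of the Chernoff exponent `(s + a) t² - a t`.
  set t := a / (2 * (s + a)) with ht_def
  have ht : 0 ≤ t := by positivity
  have ht1 : t ≤ 1 := (div_le_one₀ (by positivity)).2 (by linarith)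
  have hint : Integrable (fun x : E ↦ Real.exp (-t * ‖x‖ ^ 2)) (stdGaussian E) :=
    .of_bound (by fun_prop) 1 (.of_forall fun x ↦ by
      rw [Real.norm_of_nonneg (Real.exp_nonneg _), Real.exp_le_one_iff]
      exact mul_nonpos_of_nonpos_of_nonneg (neg_nonpos.2 ht) (sq_nonneg _))
  calc (stdGaussian E).real {x | ‖x‖ ^ 2 ≤ s}
      ≤ Real.exp (-(-t) * s) * mgf (fun x : E ↦ ‖x‖ ^ 2) (stdGaussian E) (-t) :=
        measure_le_le_exp_mul_mgf s (neg_nonpos.2 ht) hint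
    _ ≤ Real.exp (-(-t) * s) * Real.exp (-(t - t ^ 2)) ^ Module.finrank ℝ E := by
        rw [mgf_norm_sq_stdGaussian_neg ht]
        gcongr
        exact inv_sqrt_one_add_two_mul_le_exp ht
    _ = Real.exp (t * s - Module.finrank ℝ E * (t - t ^ 2)) := by
        rw [← Real.exp_nat_mul, ← Real.exp_add]
        ring_nf
    _ ≤ Real.exp (t * s - (s + a) * (t - t ^ 2)) := by
        gcongr
        nlinarith
    _ = Real.exp (-a ^ 2 / (4 * (s + a))) := by
        congr 1
        rw [ht_def]
        field_simp
        ring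

end ChiSquare

section LinearImages

variable {E F G : Type*} [NormedAddCommGroup E] [InnerProductSpace ℝ E] [FiniteDimensional ℝ E]
  [MeasurableSpace E] [BorelSpace E]
  [NormedAddCommGroup F] [InnerProductSpace ℝ F] [FiniteDimensional ℝ F]
  [MeasurableSpace F] [BorelSpace F]
  [NormedAddCommGroup G] [InnerProductSpace ℝ G] [FiniteDimensional ℝ G]
  [MeasurableSpace G] [BorelSpace G]

lemma hasLaw_stdGaussian_of_comp_adjoint_eq_id {L : E →L[ℝ] F}
    (hL : L ∘L L.adjoint = .id ℝ F) : HasLaw L (stdGaussian F) (stdGaussian E) where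
  aemeasurable := by fun_prop
  map_eq := by
    apply Measure.ext_of_charFun
    ext t
    have hnorm : ‖L.adjoint t‖ = ‖t‖ := by
      rw [← sq_eq_sq₀ (norm_nonneg _) (norm_nonneg _), ← real_inner_self_eq_norm_sq,
        ContinuousLinearMap.adjoint_inner_left, ← ContinuousLinearMap.comp_apply, hL,
        ContinuousLinearMap.id_apply, real_inner_self_eq_norm_sq]
    have hchar : charFun ((stdGaussian E).map L) t = charFun (stdGaussian E) (L.adjoint t) := by
      rw [charFun_apply, charFun_apply, integral_map (by fun_prop) (by fun_prop)]
      simp only [ContinuousLinearMap.adjoint_inner_right]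
    rw [hchar, charFun_stdGaussian, charFun_stdGaussian, hnorm]

lemma indepFun_stdGaussian_of_comp_adjoint_eq_zero {L : E →L[ℝ] F} {M : E →L[ℝ] G}
    (h : L ∘L M.adjoint = 0) : IndepFun L M (stdGaussian E) := by
  refine HasGaussianLaw.indepFun_of_covariance_inner ?_ fun x y ↦ ?_
  · exact IsGaussian.hasGaussianLaw_id.map_fun (L.prod M)
  have hx : ∀ z, ⟪x, L z⟫ = ⟪L.adjoint x, z⟫ := fun z ↦
    (ContinuousLinearMap.adjoint_inner_left L z x).symm
  have hy : ∀ z, ⟪y, M z⟫ = ⟪M.adjoint y, z⟫ := fun z ↦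
    (ContinuousLinearMap.adjoint_inner_left M z y).symm
  simp only [hx, hy]
  rw [← covarianceBilin_apply_eq_cov IsGaussian.memLp_two_id, covarianceBilin_stdGaussian,
    innerSL_apply_apply, ContinuousLinearMap.adjoint_inner_left, ← ContinuousLinearMap.comp_apply,
    h, _root_.zero_apply, inner_zero_right]

lemma stdGaussian_exists_mem_norm_add_sq_lt_le (W : Submodule ℝ E) {s a : ℝ} (hs : 0 ≤ s)
    (ha : 0 < a) (hdim : s + a + Module.finrank ℝ W ≤ Module.finrank ℝ E) :
    (stdGaussian E).real {g | ∃ w ∈ W, ‖g + w‖ ^ 2 < s} ≤ Real.exp (-a ^ 2 / (4 * (s + a))) := by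
  set P : E →L[ℝ] Wᗮ := Wᗮ.orthogonalProjectionOnto
  have hP : HasLaw P (stdGaussian Wᗮ) (stdGaussian E) :=
    hasLaw_stdGaussian_of_comp_adjoint_eq_id (by
      ext x
      simp [P, Submodule.adjoint_orthogonalProjectionOnto])
  have hsub : {g | ∃ w ∈ W, ‖g + w‖ ^ 2 < s} ⊆ {g | ‖P g‖ ^ 2 ≤ s} := by
    rintro g ⟨w, hw, hgw⟩
    have hPgw : P (g + w) = P g := by
      rw [map_add, Submodule.orthogonalProjectionOnto_orthogonal_apply_eq_zero hw, add_zero]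
    refine le_trans ?_ hgw.le
    rw [← hPgw]
    gcongr
    exact Wᗮ.norm_orthogonalProjectionOnto_apply_le _
  have hfinrank : s + a ≤ Module.finrank ℝ Wᗮ := by
    have : (Module.finrank ℝ W + Module.finrank ℝ Wᗮ : ℝ) = Module.finrank ℝ E :=
      mod_cast W.finrank_add_finrank_orthogonal
    linarith
  have hmeas : MeasurableSet {z : Wᗮ | ‖z‖ ^ 2 ≤ s} :=
    measurableSet_le (by fun_prop) measurable_const
  calc (stdGaussian E).real {g | ∃ w ∈ W, ‖g + w‖ ^ 2 < s}
      ≤ (stdGaussian E).real {g | ‖P g‖ ^ 2 ≤ s} := measureReal_mono hsub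
    _ = (stdGaussian Wᗮ).real {z | ‖z‖ ^ 2 ≤ s} := by
        rw [← hP.map_eq, map_measureReal_apply (by fun_prop) hmeas]
        rfl
    _ ≤ Real.exp (-a ^ 2 / (4 * (s + a))) := stdGaussian_norm_sq_le_le hs ha hfinrank

end LinearImages

section Conditioning

lemma measureReal_prodMk_mem_le {Ω α β : Type*} [MeasurableSpace Ω] [MeasurableSpace α]
    [MeasurableSpace β] {μ : Measure Ω} [IsProbabilityMeasure μ] {ν : Measure β}
    {A : Ω → α} {x : Ω → β} (hA : AEMeasurable A μ) (hx : HasLaw x ν μ) (hind : IndepFun A x μ)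
    {S : Set (α × β)} (hS : MeasurableSet S) {b : ℝ}
    (hb : ∀ a, ν.real (Prod.mk a ⁻¹' S) ≤ b) : μ.real {ω | (A ω, x ω) ∈ S} ≤ b := by
  have : IsProbabilityMeasure ν := hx.isProbabilityMeasure_iff.1 inferInstance
  have : IsProbabilityMeasure (μ.map A) := Measure.isProbabilityMeasure_map hA
  obtain ⟨ω₀⟩ : Nonempty Ω := μ.nonempty_of_neZero
  refine ENNReal.toReal_le_of_le_ofReal (measureReal_nonneg.trans (hb (A ω₀))) ?_
  calc μ {ω | (A ω, x ω) ∈ S}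
      = ((μ.map A).prod ν) S := by
        rw [← hx.map_eq, ← (indepFun_iff_map_prod_eq_prod_map_map hA hx.aemeasurable).1 hind,
          Measure.map_apply_of_aemeasurable (hA.prodMk hx.aemeasurable) hS]
        rfl
    _ = ∫⁻ a, ν (Prod.mk a ⁻¹' S) ∂μ.map A := Measure.prod_apply hS
    _ ≤ ∫⁻ _, ENNReal.ofReal b ∂μ.map A := lintegral_mono fun a ↦ by
        rw [← ofReal_measureReal]
        exact ENNReal.ofReal_le_ofReal (hb a)
    _ = ENNReal.ofReal b := by rw [lintegral_const, measure_univ, mul_one]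

lemma measureReal_norm_sq_le_and_one_le_inner_le {Ω E : Type*} [MeasurableSpace Ω]
    [NormedAddCommGroup E] [InnerProductSpace ℝ E] [FiniteDimensional ℝ E] [MeasurableSpace E]
    [BorelSpace E] {μ : Measure Ω} [IsProbabilityMeasure μ] {w x : Ω → E} (hw : AEMeasurable w μ)
    (hx : HasLaw x (stdGaussian E) μ) (hind : IndepFun w x μ) {c : ℝ} (hc : 0 < c) :
    μ.real {ω | c * ‖w ω‖ ^ 2 ≤ 1 ∧ 1 ≤ ⟪w ω, x ω⟫} ≤
      Real.exp (-c / 2) / √(2 * Real.pi * c) := by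
  set S : Set (E × E) := {q | c * ‖q.1‖ ^ 2 ≤ 1 ∧ 1 ≤ ⟪q.1, q.2⟫}
  have hnorm : MeasurableSet {q : E × E | c * ‖q.1‖ ^ 2 ≤ 1} :=
    measurableSet_le (by fun_prop) measurable_const
  have hinner : MeasurableSet {q : E × E | 1 ≤ ⟪q.1, q.2⟫} :=
    measurableSet_le measurable_const (by fun_prop)
  refine measureReal_prodMk_mem_le (S := S) hw hx hind (hnorm.inter hinner) fun u ↦ ?_
  by_cases hu : c * ‖u‖ ^ 2 ≤ 1
  · exact le_trans (measureReal_mono fun z hz ↦ hz.2) (stdGaussian_one_le_inner_le hc hu)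
  · have hempty : Prod.mk u ⁻¹' S = ∅ := Set.eq_empty_of_forall_notMem fun z hz ↦ hu hz.1
    rw [hempty, measureReal_empty]
    positivity

end Conditioning

section GaussianMatrix

variable {κ ι : Type*} [Fintype κ] [Fintype ι] [DecidableEq κ]

/-- The matrix with entries `A (k, j)`. Random matrices are encoded by their vector of entries, so
that a Gaussian matrix is a `stdGaussian` vector. -/
def matrixOfEntries (A : EuclideanSpace ℝ (κ × ι)) : Matrix κ ι ℝ := .of fun k j ↦ A (k, j)

/-- The combination `Aᵀ v` of the rows of `A` with coefficients `v`, as a linear map in `A`. -/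
def rowCombination (v : EuclideanSpace ℝ κ) : EuclideanSpace ℝ (κ × ι) →L[ℝ] EuclideanSpace ℝ ι :=
  LinearMap.toContinuousLinearMap
    { toFun A := toEuclideanLin (matrixOfEntries A)ᵀ v
      map_add' A B := by
        ext j
        simp [matrixOfEntries, toEuclideanLin, mulVec, dotProduct, add_mul, Finset.sum_add_distrib]
      map_smul' r A := by
        ext j
        simp [matrixOfEntries, toEuclideanLin, mulVec, dotProduct, mul_assoc, Finset.mul_sum] }

lemma rowCombination_apply (v : EuclideanSpace ℝ κ) (A : EuclideanSpace ℝ (κ × ι)) :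
    rowCombination v A = toEuclideanLin (matrixOfEntries A)ᵀ v := rfl

lemma adjoint_rowCombination_apply (v : EuclideanSpace ℝ κ) (x : EuclideanSpace ℝ ι) :
    (rowCombination v).adjoint x = WithLp.toLp 2 fun p ↦ v p.1 * x p.2 := by
  refine ext_inner_right ℝ fun A ↦ ?_
  rw [ContinuousLinearMap.adjoint_inner_left, rowCombination_apply]
  simp [PiLp.inner_apply, toEuclideanLin, mulVec, dotProduct, matrixOfEntries,
    Fintype.sum_prod_type_right, Finset.sum_mul, mul_assoc]

lemma rowCombination_comp_adjoint (v w : EuclideanSpace ℝ κ) :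
    rowCombination v ∘L (rowCombination w).adjoint =
      ⟪v, w⟫ • ContinuousLinearMap.id ℝ (EuclideanSpace ℝ ι) := by
  ext x j
  rw [ContinuousLinearMap.comp_apply, adjoint_rowCombination_apply, rowCombination_apply]
  simp [PiLp.inner_apply, toEuclideanLin, mulVec, dotProduct, matrixOfEntries, Finset.sum_mul,
    mul_comm (v _), mul_assoc]

lemma norm_rowCombination_sq (v : EuclideanSpace ℝ κ) (A : EuclideanSpace ℝ (κ × ι)) :
    ‖rowCombination v A‖ ^ 2 =
      v ⬝ᵥ ((matrixOfEntries A * (matrixOfEntries A)ᵀ) *ᵥ v) := by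
  rw [← real_inner_self_eq_norm_sq, EuclideanSpace.inner_eq_star_dotProduct, star_trivial,
    ← mulVec_mulVec, dotProduct_mulVec v, ← mulVec_transpose]
  rfl

/-- The exceptional set of matrices `A` with a row combination `Aᵀ v` such that `⟪v, y⟫ = 1` and
`‖Aᵀ v‖² < c`; off this set the least-norm interpolant of `y` has squared norm at most `1 / c`. -/
def smallRowCombinations (ι : Type*) [Fintype ι] (y : EuclideanSpace ℝ κ) (c : ℝ) :
    Set (EuclideanSpace ℝ (κ × ι)) :=
  {A | ∃ v, ⟪v, y⟫ = 1 ∧ ‖rowCombination v A‖ ^ 2 < c}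

lemma isOpen_smallRowCombinations (y : EuclideanSpace ℝ κ) (c : ℝ) :
    IsOpen (smallRowCombinations ι y c) := by
  simp only [smallRowCombinations, Set.ofPred_exists, Set.ofPred_and]
  exact isOpen_iUnion fun v ↦ isOpen_const.inter (isOpen_lt (by fun_prop) continuous_const)

lemma stdGaussian_exists_norm_add_rowCombination_sq_lt_le (A : EuclideanSpace ℝ (κ × ι)) {s a : ℝ}
    (hs : 0 ≤ s) (ha : 0 < a) (hdim : s + a + Fintype.card κ ≤ Fintype.card ι) :
    (stdGaussian (EuclideanSpace ℝ ι)).real {g | ∃ v, ‖g + rowCombination v A‖ ^ 2 < s} ≤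
      Real.exp (-a ^ 2 / (4 * (s + a))) := by
  set W := LinearMap.range (toEuclideanLin (matrixOfEntries A)ᵀ)
  have hW : (Module.finrank ℝ W : ℝ) ≤ Fintype.card κ :=
    mod_cast (LinearMap.finrank_range_le _).trans_eq finrank_euclideanSpace
  refine le_trans (measureReal_mono ?_) (stdGaussian_exists_mem_norm_add_sq_lt_le W hs ha ?_)
  · rintro g ⟨v, hv⟩
    exact ⟨_, ⟨v, rfl⟩, hv⟩
  · rw [finrank_euclideanSpace]
    linarith

lemma stdGaussian_smallRowCombinations_le_of_norm_eq_one {u : EuclideanSpace ℝ κ} (hu : ‖u‖ = 1)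
    {s a : ℝ} (hs : 0 ≤ s) (ha : 0 < a) (hdim : s + a + Fintype.card κ ≤ Fintype.card ι) :
    (stdGaussian _).real (smallRowCombinations ι u s) ≤ Real.exp (-a ^ 2 / (4 * (s + a))) := by
  set L : EuclideanSpace ℝ (κ × ι) →L[ℝ] EuclideanSpace ℝ ι := rowCombination u
  set P : EuclideanSpace ℝ (κ × ι) →L[ℝ] EuclideanSpace ℝ (κ × ι) := .id ℝ _ - L.adjoint ∘L L
  have hL : L ∘L L.adjoint = .id ℝ _ := by
    rw [rowCombination_comp_adjoint, real_inner_self_eq_norm_sq, hu, one_pow, one_smul]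
  have hLP : L ∘L P.adjoint = 0 := by
    simp only [P, map_sub, ContinuousLinearMap.adjoint_id, ContinuousLinearMap.adjoint_comp,
      ContinuousLinearMap.adjoint_adjoint, ContinuousLinearMap.comp_sub,
      ContinuousLinearMap.comp_id, ← ContinuousLinearMap.comp_assoc, hL,
      ContinuousLinearMap.id_comp, sub_self]
  have hdecomp : ∀ v A, ⟪v, u⟫ = 1 → rowCombination v A = L A + rowCombination v (P A) := by
    intro v A hv
    have : rowCombination v (L.adjoint (L A)) = L A := by
      rw [← ContinuousLinearMap.comp_apply, rowCombination_comp_adjoint, hv, one_smul,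
        ContinuousLinearMap.id_apply]
    simp [P, this]
  set S : Set (EuclideanSpace ℝ (κ × ι) × EuclideanSpace ℝ ι) :=
    {q | ∃ v, ‖q.2 + rowCombination v q.1‖ ^ 2 < s}
  have hS : IsOpen S := by
    simp only [S, Set.ofPred_exists]
    exact isOpen_iUnion fun v ↦ isOpen_lt (by fun_prop) continuous_const
  refine le_trans (measureReal_mono ?_) (measureReal_prodMk_mem_le P.measurable.aemeasurable
    (hasLaw_stdGaussian_of_comp_adjoint_eq_id hL)
    (indepFun_stdGaussian_of_comp_adjoint_eq_zero hLP).symm hS.measurableSet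
    fun B ↦ stdGaussian_exists_norm_add_rowCombination_sq_lt_le B hs ha hdim)
  rintro A ⟨v, hv, hlt⟩
  exact ⟨v, by rwa [← hdecomp v A hv]⟩

lemma stdGaussian_smallRowCombinations_le {y : EuclideanSpace ℝ κ} {c s a : ℝ}
    (hc : 0 ≤ c) (hcs : c * ‖y‖ ^ 2 ≤ s) (ha : 0 < a)
    (hdim : s + a + Fintype.card κ ≤ Fintype.card ι) :
    (stdGaussian _).real (smallRowCombinations ι y c) ≤ Real.exp (-a ^ 2 / (4 * (s + a))) := by
  rcases eq_or_ne y 0 with rfl | hy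
  · simpa [smallRowCombinations] using Real.exp_nonneg _
  have hy0 : 0 < ‖y‖ := norm_pos_iff.2 hy
  refine le_trans (measureReal_mono ?_)
    (stdGaussian_smallRowCombinations_le_of_norm_eq_one (norm_smul_inv_norm (𝕜 := ℝ) hy)
      (le_trans (by positivity) hcs) ha hdim)
  rintro A ⟨v, hv, hlt⟩
  refine ⟨‖y‖ • v, ?_, lt_of_lt_of_le ?_ hcs⟩
  · simp [real_inner_smul_left, real_inner_smul_right, hv, hy0.ne']
  · rw [rowCombination_apply, map_smul, ← rowCombination_apply, norm_smul, norm_norm, mul_pow,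
      mul_comm]
    gcongr

end GaussianMatrix

section LeastNormInterpolant

variable {κ ι : Type*} [Fintype κ] [Fintype ι] [DecidableEq κ]

/-- The least-norm solution `Aᵀ (A Aᵀ)⁻¹ y` of `A w = y`, meaningful when `A Aᵀ` is invertible. -/
def leastNormInterpolant (y : EuclideanSpace ℝ κ) (A : EuclideanSpace ℝ (κ × ι)) :
    EuclideanSpace ℝ ι :=
  rowCombination (WithLp.toLp 2 ((matrixOfEntries A * (matrixOfEntries A)ᵀ)⁻¹ *ᵥ y)) A

lemma inner_leastNormInterpolant (y : EuclideanSpace ℝ κ) (A : EuclideanSpace ℝ (κ × ι))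
    (x : EuclideanSpace ℝ ι) :
    ⟪leastNormInterpolant y A, x⟫ = y ⬝ᵥ
      ((matrixOfEntries A * (matrixOfEntries A)ᵀ)⁻¹ *ᵥ (matrixOfEntries A *ᵥ x)) := by
  set M := matrixOfEntries A
  have hsymm : ((M * Mᵀ)⁻¹)ᵀ = (M * Mᵀ)⁻¹ := by
    rw [transpose_nonsing_inv, transpose_mul, transpose_transpose]
  calc ⟪leastNormInterpolant y A, x⟫
      = (Mᵀ *ᵥ ((M * Mᵀ)⁻¹ *ᵥ y)) ⬝ᵥ x := by
        rw [EuclideanSpace.inner_eq_star_dotProduct, star_trivial, dotProduct_comm]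
        rfl
    _ = y ⬝ᵥ ((M * Mᵀ)⁻¹ *ᵥ (M *ᵥ x)) := by
        rw [mulVec_transpose, ← dotProduct_mulVec, dotProduct_mulVec y, ← mulVec_transpose, hsymm]

lemma mul_norm_leastNormInterpolant_sq_le_one {y : EuclideanSpace ℝ κ}
    {A : EuclideanSpace ℝ (κ × ι)} {c : ℝ}
    (hdet : IsUnit (matrixOfEntries A * (matrixOfEntries A)ᵀ).det)
    (hA : A ∉ smallRowCombinations ι y c) : c * ‖leastNormInterpolant y A‖ ^ 2 ≤ 1 := by
  rw [leastNormInterpolant]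
  set v : EuclideanSpace ℝ κ :=
    WithLp.toLp 2 ((matrixOfEntries A * (matrixOfEntries A)ᵀ)⁻¹ *ᵥ y)
  set q := ‖rowCombination v A‖ ^ 2 with hq
  have hvq : ⟪v, y⟫ = q := by
    rw [hq, norm_rowCombination_sq, mulVec_mulVec, mul_nonsing_inv _ hdet,
      one_mulVec, EuclideanSpace.inner_eq_star_dotProduct, star_trivial, dotProduct_comm]
  have hq_nonneg : 0 ≤ q := sq_nonneg _
  clear_value q
  rcases hq_nonneg.eq_or_lt with hq0 | hq0
  · rw [← hq0, mul_zero]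
    exact zero_le_one
  have hscale : c ≤ ‖rowCombination (q⁻¹ • v) A‖ ^ 2 := by
    by_contra! hlt
    exact hA ⟨q⁻¹ • v, by rw [real_inner_smul_left, hvq, inv_mul_cancel₀ hq0.ne'], hlt⟩
  rw [rowCombination_apply, map_smul, ← rowCombination_apply, norm_smul, mul_pow,
    Real.norm_of_nonneg (inv_nonneg.2 hq0.le), ← hq] at hscale
  calc c * q ≤ q⁻¹ ^ 2 * q * q := by gcongr
    _ = 1 := by field_simp

lemma measurable_leastNormInterpolant (y : EuclideanSpace ℝ κ) :
    Measurable (leastNormInterpolant (ι := ι) y) := by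
  have hM : Continuous (matrixOfEntries (κ := κ) (ι := ι)) :=
    continuous_matrix fun k j ↦ by simp only [matrixOfEntries, of_apply]; fun_prop
  have hK : Continuous fun A : EuclideanSpace ℝ (κ × ι) ↦
      matrixOfEntries A * (matrixOfEntries A)ᵀ := hM.matrix_mul hM.matrix_transpose
  have hinv : ∀ k l, Measurable fun A : EuclideanSpace ℝ (κ × ι) ↦
      (matrixOfEntries A * (matrixOfEntries A)ᵀ)⁻¹ k l := fun k l ↦ by
    simp only [inv_def, Matrix.smul_apply, Ring.inverse_eq_inv', smul_eq_mul]
    exact hK.matrix_det.measurable.inv.mul (hK.matrix_adjugate.matrix_elem k l).measurable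
  change Measurable fun A : EuclideanSpace ℝ (κ × ι) ↦ WithLp.toLp 2
    ((matrixOfEntries A)ᵀ *ᵥ ((matrixOfEntries A * (matrixOfEntries A)ᵀ)⁻¹ *ᵥ y))
  refine (PiLp.continuous_toLp 2 _).measurable.comp (measurable_pi_lambda _ fun j ↦ ?_)
  exact Finset.measurable_sum _ fun k _ ↦ ((hM.matrix_elem k j).measurable).mul
    (Finset.measurable_sum _ fun l _ ↦ (hinv k l).mul_const _)

lemma measureReal_one_le_mul_inner_leastNormInterpolant_le {Ω : Type*} [MeasurableSpace Ω]
    {μ : Measure Ω} [IsProbabilityMeasure μ]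
    {A : Ω → EuclideanSpace ℝ (κ × ι)} {x : Ω → EuclideanSpace ℝ ι}
    (hA : HasLaw A (stdGaussian _) μ) (hx : HasLaw x (stdGaussian _) μ) (hind : IndepFun A x μ)
    {η : ℝ} (hη : |η| ≤ 1) {y : EuclideanSpace ℝ κ} {c s a : ℝ} (hc : 0 < c)
    (hcs : c * ‖y‖ ^ 2 ≤ s) (ha : 0 < a) (hdim : s + a + Fintype.card κ ≤ Fintype.card ι) :
    μ.real {ω | IsUnit (matrixOfEntries (A ω) * (matrixOfEntries (A ω))ᵀ).det ∧
        1 ≤ η * ⟪leastNormInterpolant y (A ω), x ω⟫} ≤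
      Real.exp (-c / 2) / √(2 * Real.pi * c) + Real.exp (-a ^ 2 / (4 * (s + a))) := by
  set w : Ω → EuclideanSpace ℝ ι := fun ω ↦ η • leastNormInterpolant y (A ω)
  have hw : Measurable fun B : EuclideanSpace ℝ (κ × ι) ↦ η • leastNormInterpolant y B :=
    (measurable_leastNormInterpolant y).const_smul η
  calc μ.real {ω | IsUnit (matrixOfEntries (A ω) * (matrixOfEntries (A ω))ᵀ).det ∧
          1 ≤ η * ⟪leastNormInterpolant y (A ω), x ω⟫}
      ≤ μ.real ({ω | c * ‖w ω‖ ^ 2 ≤ 1 ∧ 1 ≤ ⟪w ω, x ω⟫} ∪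
          {ω | A ω ∈ smallRowCombinations ι y c}) := by
        refine measureReal_mono fun ω ⟨hdet, h1⟩ ↦ or_iff_not_imp_right.2 fun hbad ↦ ⟨?_, ?_⟩
        · refine le_trans ?_ (mul_norm_leastNormInterpolant_sq_le_one hdet hbad)
          gcongr
          rw [norm_smul]
          exact mul_le_of_le_one_left (norm_nonneg _) hη
        · rwa [real_inner_smul_left]
    _ ≤ μ.real {ω | c * ‖w ω‖ ^ 2 ≤ 1 ∧ 1 ≤ ⟪w ω, x ω⟫} +
          μ.real {ω | A ω ∈ smallRowCombinations ι y c} := measureReal_union_le _ _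
    _ ≤ _ := by
        gcongr
        · exact measureReal_norm_sq_le_and_one_le_inner_le (hw.comp_aemeasurable hA.aemeasurable)
            hx (hind.comp hw measurable_id) hc
        · rw [hA.measureReal_eq (p := (· ∈ smallRowCombinations ι y c))
            (isOpen_smallRowCombinations y c).measurableSet]
          exact stdGaussian_smallRowCombinations_le hc.le hcs ha hdim

end LeastNormInterpolant

section IndependentFamily

variable {Ω ι : Type*} [MeasurableSpace Ω] {μ : Measure Ω} {Z : ι → Ω → ℝ}

lemma hasLaw_toLp_stdGaussian [Fintype ι] (hlaw : ∀ i, HasLaw (Z i) (gaussianReal 0 1) μ)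
    (hind : iIndepFun Z μ) :
    HasLaw (fun ω ↦ WithLp.toLp 2 fun i ↦ Z i ω) (stdGaussian (EuclideanSpace ℝ ι)) μ := by
  have htoLp : HasLaw (WithLp.toLp 2) (stdGaussian (EuclideanSpace ℝ ι))
      (.pi fun _ : ι ↦ gaussianReal 0 1) := ⟨by fun_prop, map_pi_eq_stdGaussian⟩
  exact htoLp.fun_comp (iIndepFun.hasLaw_pi hlaw hind)

lemma indepFun_toLp_of_disjoint_range {α β : Type*} [Finite α] [Finite β] {f : α → ι} {g : β → ι}
    (hfg : Disjoint (Set.range f) (Set.range g)) (hmeas : ∀ i, Measurable (Z i))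
    (hind : iIndepFun Z μ) :
    IndepFun (fun ω ↦ WithLp.toLp 2 fun a ↦ Z (f a) ω) (fun ω ↦ WithLp.toLp 2 fun b ↦ Z (g b) ω)
      μ := by
  classical
  have := Fintype.ofFinite α
  have := Fintype.ofFinite β
  have hdisj : Disjoint (Finset.univ.image f) (Finset.univ.image g) := by
    rw [← Finset.disjoint_coe]
    simpa using hfg
  refine (hind.indepFun_finset _ _ hdisj hmeas).comp
    (φ := fun h ↦ WithLp.toLp 2 fun a ↦ h ⟨f a, by simp⟩)
    (ψ := fun h ↦ WithLp.toLp 2 fun b ↦ h ⟨g b, by simp⟩) ?_ ?_ <;> fun_prop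

end IndependentFamily

namespace IsGaussSample

variable {Ω : Type*} [MeasurableSpace Ω] {μ : Measure Ω} {n d : ℕ}
  {X : Ω → Matrix (Fin n) (Fin d) ℝ}

lemma hasLaw_entry (hX : IsGaussSample μ X) (p : Fin n × Fin d) :
    HasLaw (fun ω ↦ X ω p.1 p.2) (gaussianReal 0 1) μ :=
  ⟨(hX.meas p.1 p.2).aemeasurable, hX.law p.1 p.2⟩

lemma hasLaw_rowDel (hX : IsGaussSample μ X) (i : Fin n) :
    HasLaw (fun ω ↦ WithLp.toLp 2 fun p : {j // j ≠ i} × Fin d ↦ rowDel (X ω) i p.1 p.2)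
      (stdGaussian _) μ :=
  hasLaw_toLp_stdGaussian (fun p ↦ hX.hasLaw_entry (p.1, p.2))
    (hX.indep.precomp (Subtype.val_injective.prodMap Function.injective_id))

lemma hasLaw_row (hX : IsGaussSample μ X) (i : Fin n) :
    HasLaw (fun ω ↦ WithLp.toLp 2 (X ω i)) (stdGaussian _) μ :=
  hasLaw_toLp_stdGaussian (fun j ↦ hX.hasLaw_entry (i, j))
    (hX.indep.precomp (Prod.mk_right_injective i))

lemma indepFun_rowDel_row (hX : IsGaussSample μ X) (i : Fin n) :
    IndepFun (fun ω ↦ WithLp.toLp 2 fun p : {j // j ≠ i} × Fin d ↦ rowDel (X ω) i p.1 p.2)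
      (fun ω ↦ WithLp.toLp 2 (X ω i)) μ :=
  indepFun_toLp_of_disjoint_range (f := fun p : {j // j ≠ i} × Fin d ↦ (p.1.1, p.2))
    (g := fun j ↦ (i, j))
    (Set.disjoint_range_iff.2 fun p _ h ↦ p.1.2 (congrArg Prod.fst h))
    (fun p ↦ hX.meas p.1 p.2) hX.indep

end IsGaussSample

lemma norm_toLp_vecDel_sq_le {n : ℕ} {y : Fin n → ℝ} (hy : ∀ i, |y i| ≤ 1) (i : Fin n) :
    ‖WithLp.toLp 2 (vecDel y i)‖ ^ 2 ≤ n := by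
  rw [EuclideanSpace.real_norm_sq_eq]
  calc ∑ j, vecDel y i j ^ 2 ≤ ∑ _j : {j : Fin n // j ≠ i}, (1 : ℝ) :=
        Finset.sum_le_sum fun j _ ↦ (sq_le_one_iff_abs_le_one _).2 (hy j)
    _ ≤ n := by simp

section Numerics

lemma eventually_const_mul_log_sq_le (C : ℝ) :
    ∀ᶠ x : ℝ in Filter.atTop, C * Real.log x ^ 2 ≤ x := by
  filter_upwards [(Real.isLittleO_pow_log_id_atTop.const_mul_left C).bound one_pos,
    Filter.eventually_ge_atTop 0] with x hx hx0
  rw [one_mul, id, Real.norm_of_nonneg hx0] at hx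
  exact (Real.le_norm_self _).trans hx

lemma one_le_log_of_three_le {x : ℝ} (hx : 3 ≤ x) : 1 ≤ Real.log x :=
  (Real.le_log_iff_exp_le (by linarith)).2 (Real.exp_one_lt_three.le.trans hx)

lemma exp_neg_log_div_sqrt_eq {n : ℝ} (hn : 0 < n) :
    Real.exp (-(2 * Real.log n) / 2) / √(2 * Real.pi * (2 * Real.log n)) =
      1 / (2 * n * √(Real.pi * Real.log n)) := by
  rw [show 2 * Real.pi * (2 * Real.log n) = 2 ^ 2 * (Real.pi * Real.log n) by ring,
    Real.sqrt_mul (by positivity), Real.sqrt_sq zero_le_two, neg_div,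
    mul_div_cancel_left₀ _ two_ne_zero, Real.exp_neg, Real.exp_log hn]
  field_simp

lemma exp_neg_sq_div_le_one_div_sq {n : ℝ} (hn : 0 < n) (hlog : 1 ≤ Real.log n)
    (hlog_sq : 24 * Real.log n ^ 2 ≤ n) :
    Real.exp (-n ^ 2 / (4 * (2 * n * Real.log n + n))) ≤ 1 / n ^ 2 := by
  have hsq : 1 / n ^ 2 = Real.exp (-(2 * Real.log n)) := by
    rw [Real.exp_neg, two_mul, Real.exp_add, Real.exp_log hn, ← sq, one_div]
  rw [hsq, Real.exp_le_exp, neg_div, neg_le_neg_iff, le_div_iff₀ (by positivity)]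
  calc 2 * Real.log n * (4 * (2 * n * Real.log n + n))
      = n * (16 * Real.log n ^ 2 + 8 * Real.log n) := by ring
    _ ≤ n * (24 * Real.log n ^ 2) := by
        gcongr
        nlinarith
    _ ≤ n ^ 2 := by
        rw [sq n]
        gcongr

lemma le_natCeil_of_two_div_sqrt_log_le {n : ℕ} (hn : 3 ≤ n) {ε : ℝ}
    (hε : 2 / √(Real.log n) ≤ ε) :
    2 * n * Real.log n + 2 * n ≤ (⌈(2 + ε) * n * Real.log n⌉₊ : ℝ) := by
  have hlog : 1 ≤ Real.log n := one_le_log_of_three_le (mod_cast hn)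
  have hsqrt : 0 < √(Real.log n) := Real.sqrt_pos.2 (by linarith)
  have hεlog : 2 ≤ ε * Real.log n := by
    calc (2 : ℝ) ≤ ε * √(Real.log n) := (div_le_iff₀ hsqrt).1 hε
      _ ≤ ε * Real.log n := by
        gcongr
        · exact le_trans (by positivity) hε
        · exact Real.sqrt_le_self_iff.2 (.inr hlog)
  calc 2 * n * Real.log n + 2 * n ≤ 2 * n * Real.log n + ε * Real.log n * n := by gcongr
    _ = (2 + ε) * n * Real.log n := by ring
    _ ≤ _ := Nat.le_ceil _

end Numerics

theorem stmt16_general :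
    ∃ n₀ : ℕ, ∀ n ≥ n₀, ∀ d : ℕ, 2 * n * Real.log n + 2 * n ≤ d →
      ∀ (Ω : Type*) (_ : MeasurableSpace Ω) (μ : Measure Ω), IsProbabilityMeasure μ →
      ∀ (X : Ω → Matrix (Fin n) (Fin d) ℝ) (y : Fin n → ℝ),
        (∀ i, |y i| ≤ 1) → IsGaussSample μ X →
        ∀ i : Fin n,
          μ {ω | IsUnit (rowDel (X ω) i * (rowDel (X ω) i)ᵀ).det ∧
              1 ≤ y i * (vecDel y i ⬝ᵥ ((rowDel (X ω) i * (rowDel (X ω) i)ᵀ)⁻¹ *ᵥ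
                (rowDel (X ω) i *ᵥ X ω i)))} ≤
            ENNReal.ofReal
              (1 / (2 * n * √(Real.pi * Real.log n)) + 1 / (n : ℝ) ^ 2) := by
  obtain ⟨n₁, hn₁⟩ := Filter.eventually_atTop.1 (eventually_const_mul_log_sq_le 24).natCast_atTop
  refine ⟨max n₁ 3, fun n hn d hd Ω _ μ _ X y hy hX i ↦ ?_⟩
  have hn3 : (3 : ℝ) ≤ n := mod_cast le_of_max_le_right hn
  have hn0 : (0 : ℝ) < n := by linarith
  have hlog : 1 ≤ Real.log n := one_le_log_of_three_le hn3
  have hnorm : 2 * Real.log n * ‖WithLp.toLp 2 (vecDel y i)‖ ^ 2 ≤ 2 * n * Real.log n := by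
    rw [mul_right_comm]
    gcongr
    exact norm_toLp_vecDel_sq_le hy i
  have hdim : 2 * n * Real.log n + n + (Fintype.card {j // j ≠ i} : ℝ) ≤ Fintype.card (Fin d) := by
    have hcard : (Fintype.card {j // j ≠ i} : ℝ) ≤ n := by simp
    rw [Fintype.card_fin]
    linarith
  rw [← ofReal_measureReal]
  refine ENNReal.ofReal_le_ofReal ?_
  have hmain := measureReal_one_le_mul_inner_leastNormInterpolant_le
    (hX.hasLaw_rowDel i) (hX.hasLaw_row i)
    (hX.indepFun_rowDel_row i) (hy i) (by positivity) hnorm hn0 hdim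
  simp only [inner_leastNormInterpolant] at hmain
  rw [exp_neg_log_div_sqrt_eq hn0] at hmain
  refine hmain.trans ?_
  gcongr
  exact exp_neg_sq_div_le_one_div_sq hn0 hlog (hn₁ n (le_of_max_le_left hn))

/-- Above the threshold `d = ⌈(2+ε) n ln n⌉`, for each `i` the probability that the
leave-one-out statistic `yᵢ y₋ᵢᵀ K₋ᵢ⁻¹ X₋ᵢ xᵢ` is at least `1` is at most
`1/(2n√(π log n)) + 1/n²`. -/
theorem stmt16 :
    ∃ C₂ > (0 : ℝ), ∃ n₀ : ℕ, ∀ n ≥ n₀, ∀ ε : ℝ,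
      C₂ / Real.sqrt (Real.log n) ≤ ε →
      ∀ (Ω : Type*) (_ : MeasurableSpace Ω) (μ : Measure Ω), IsProbabilityMeasure μ →
      ∀ (X : Ω → Matrix (Fin n) (Fin ⌈(2 + ε) * n * Real.log n⌉₊) ℝ) (y : Fin n → ℝ),
        (∀ i, y i = 1 ∨ y i = -1) → IsGaussSample μ X →
        ∀ i : Fin n,
          μ {ω | IsUnit (rowDel (X ω) i * (rowDel (X ω) i)ᵀ).det ∧
              1 ≤ y i * (vecDel y i ⬝ᵥ ((rowDel (X ω) i * (rowDel (X ω) i)ᵀ)⁻¹ *ᵥ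
                (rowDel (X ω) i *ᵥ X ω i)))} ≤
            ENNReal.ofReal
              (1 / (2 * n * Real.sqrt (Real.pi * Real.log n)) + 1 / (n : ℝ) ^ 2) := by
  obtain ⟨n₀, h⟩ := stmt16_general
  exact ⟨2, two_pos, max n₀ 3, fun n hn ε hε Ω _ μ hμ X y hy ↦ h n (le_of_max_le_left hn) _
    (le_natCeil_of_two_div_sqrt_log_le (le_of_max_le_right hn) hε) Ω _ μ hμ X y
    fun i ↦ by rcases hy i with hi | hi <;> simp [hi]⟩

end
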